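/- Fix a ≠ 0. For ω > |a| and θ ∈ ℝ define Φ(ω, θ) = (√((ω² − a²)/(1 + θ²)), θ·√((ω² − a²)/(1 + θ²))), and for (x₁, x₂) ≠ (0,0) define the symmetric 2×2 matrix G̃(x₁, x₂) = (1/(x₁² + x₂² + a²))·[[x₁² + a², x₁x₂], [x₁x₂, x₂² + a²]]. Then at every (ω, θ) with ω > |a|: (DΦ)ᵀ · G̃(Φ(ω,θ)) · (DΦ) = [[ω²/(ω² − a²), 0], [0, a²(ω² − a²)/(ω²(1 + θ²)²)]], where DΦ is the 2×2 Jacobian matrix of Φ. -/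

import Mathlib

open Matrix

/-- The inverse coordinate change `Φ(ω,θ) = (x₁, x₂)` from the orthogonal coordinates
`(ω, θ)` to the invariant coordinates `(x₁, x₂)` of the orbit space of the helicoidal
group with pitch `a`. -/
noncomputable def invCoords (a ω θ : ℝ) : ℝ × ℝ :=
  (Real.sqrt ((ω ^ 2 - a ^ 2) / (1 + θ ^ 2)),
   θ * Real.sqrt ((ω ^ 2 - a ^ 2) / (1 + θ ^ 2)))

/-- The quotient metric of Euclidean `ℝ³` by the helicoidal group with pitch `a`,
in the invariant coordinates `(x₁, x₂)`. -/
noncomputable def quotMetric (a x₁ x₂ : ℝ) : Matrix (Fin 2) (Fin 2) ℝ :=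
  (1 / (x₁ ^ 2 + x₂ ^ 2 + a ^ 2)) •
    !![x₁ ^ 2 + a ^ 2, x₁ * x₂; x₁ * x₂, x₂ ^ 2 + a ^ 2]

/-- In the orthogonal coordinates `(ω, θ)` the quotient metric of the helicoidal group
with pitch `a ≠ 0` takes the diagonal form
`g̃ = ω²/(ω²−a²) dω² + a²(ω²−a²)/(ω²(1+θ²)²) dθ²`:
`(DΦ)ᵀ · G̃(Φ(ω,θ)) · (DΦ) = diag(ω²/(ω²−a²), a²(ω²−a²)/(ω²(1+θ²)²))`. -/
theorem quotMetric_diagonal_in_omega_theta (a : ℝ) (ha : a ≠ 0) :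
    ∀ ω θ : ℝ, |a| < ω → ∀ J : Matrix (Fin 2) (Fin 2) ℝ,
      HasDerivAt (fun ω' => invCoords a ω' θ) (J 0 0, J 1 0) ω →
      HasDerivAt (fun θ' => invCoords a ω θ') (J 0 1, J 1 1) θ →
      Jᵀ * quotMetric a (invCoords a ω θ).1 (invCoords a ω θ).2 * J
        = !![ω ^ 2 / (ω ^ 2 - a ^ 2), 0;
             0, a ^ 2 * (ω ^ 2 - a ^ 2) / (ω ^ 2 * (1 + θ ^ 2) ^ 2)] := by
  intro ω θ hω J h1 h2
  have hpos : 0 < ω ^ 2 - a ^ 2 := by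
    have h := sq_lt_sq' (by linarith [abs_nonneg a, neg_abs_le a]) hω
    rw [sq_abs] at h
    linarith
  have hω0 : ω ≠ 0 := (lt_of_le_of_lt (abs_nonneg a) hω).ne'
  have hT : 0 < 1 + θ ^ 2 := by positivity
  have hu : 0 < (ω ^ 2 - a ^ 2) / (1 + θ ^ 2) := div_pos hpos hT
  obtain ⟨s, hs⟩ : ∃ s, s = Real.sqrt ((ω ^ 2 - a ^ 2) / (1 + θ ^ 2)) := ⟨_, rfl⟩
  have hs0 : 0 < s := hs ▸ Real.sqrt_pos.mpr hu
  have hss : s ^ 2 * (1 + θ ^ 2) = ω ^ 2 - a ^ 2 := by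
    rw [hs, Real.sq_sqrt hu.le]
    field_simp
  have d1 : HasDerivAt (fun x : ℝ => Real.sqrt ((x ^ 2 - a ^ 2) / (1 + θ ^ 2)))
      (ω / (s * (1 + θ ^ 2))) ω := by
    have h := ((((hasDerivAt_id ω).pow 2).sub_const (a ^ 2)).div_const (1 + θ ^ 2)).sqrt hu.ne'
    refine HasDerivAt.congr_deriv (f := _) h ?_
    simp only [id, Pi.pow_apply]
    rw [← hs]
    field_simp
    try norm_num
  have d2 : HasDerivAt (fun x : ℝ => Real.sqrt ((ω ^ 2 - a ^ 2) / (1 + x ^ 2)))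
      (-(s * θ) / (1 + θ ^ 2)) θ := by
    have h := ((hasDerivAt_const θ (ω ^ 2 - a ^ 2)).div
      (((hasDerivAt_id θ).pow 2).const_add 1) hT.ne').sqrt hu.ne'
    refine HasDerivAt.congr_deriv (f := _) h ?_
    simp only [id, Pi.pow_apply, Pi.div_apply]
    rw [← hs, ← hss]
    field_simp
    try norm_num
    try ring
  have e1 := h1.unique (d1.prodMk (d1.const_mul θ))
  have e2 := h2.unique (d2.prodMk ((hasDerivAt_id θ).mul d2))
  simp only [Prod.mk.injEq, id, ← hs] at e1 e2
  obtain ⟨e00, e10⟩ := e1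
  obtain ⟨e01, e11⟩ := e2
  have e11' : J 1 1 = s / (1 + θ ^ 2) := by
    rw [e11]; field_simp; ring
  have hden : s ^ 2 + (θ * s) ^ 2 + a ^ 2 = ω ^ 2 := by linarith
  have ha2 : a ^ 2 = ω ^ 2 - s ^ 2 * (1 + θ ^ 2) := by linarith
  have hJ : J = !![ω / (s * (1 + θ ^ 2)), -(s * θ) / (1 + θ ^ 2);
      θ * (ω / (s * (1 + θ ^ 2))), s / (1 + θ ^ 2)] := by
    ext i j
    fin_cases i <;> fin_cases j <;> simp [e00, e10, e01, e11']
  simp only [invCoords, quotMetric, ← hs]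
  rw [hden, ← hss, ha2, hJ]
  ext i j
  fin_cases i <;> fin_cases j <;>
    simp [Matrix.mul_apply, Fin.sum_univ_two] <;> field_simp <;> ring
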